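/- arXiv:gr-qc/0502089 — 6 statements merged into one kernel-verified Lean document; each statement's English description precedes it below -/
import Mathlib

section
/- For every real (2n)×(2n) matrix g and every n-tuple of real (2n)×(2n) matrices A₁, …, Aₙ, one has F(g·A₁·gᵀ, …, g·Aₙ·gᵀ) = det(g) · F(A₁, …, Aₙ). -/
/-- The multilinear ε-contraction polynomial on `n`-tuples of real `(2n)×(2n)` matrices:
`F(A₁, …, Aₙ) = Σ_{σ ∈ S_{2n}} sgn(σ) · ∏_{i=1}^{n} (A_i)_{σ(2i−1), σ(2i)}`. -/
noncomputable def epsContract (n : ℕ) (A : Fin n → Matrix (Fin (2 * n)) (Fin (2 * n)) ℝ) : ℝ :=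
  ∑ σ : Equiv.Perm (Fin (2 * n)),
    ((Equiv.Perm.sign σ : ℤ) : ℝ) *
      ∏ i : Fin n,
        A i (σ ⟨2 * (i : ℕ), by have := i.isLt; omega⟩)
            (σ ⟨2 * (i : ℕ) + 1, by have := i.isLt; omega⟩)

/-!
Let `T(v) = ∏ᵢ Aᵢ(v_{2i-1}, v_{2i})` be the multilinear form `A₁ ⊗ ⋯ ⊗ Aₙ`. Its alternatization is
an alternating form of top degree, and `F(A₁, …, Aₙ)` is its value on the standard basis. Replacing
every `Aᵢ` by `g Aᵢ gᵀ` precomposes `T`, hence its alternatization, with `gᵀ`; an endomorphism acts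
on top-degree alternating forms by its determinant.
-/

open Equiv Module

theorem alternatization_compLinearMap {R M M' N κ : Type*} [Semiring R] [AddCommMonoid M]
    [Module R M] [AddCommMonoid M'] [Module R M'] [AddCommGroup N] [Module R N] [Fintype κ]
    [DecidableEq κ] (T : MultilinearMap R (fun _ : κ => M) N) (φ : M' →ₗ[R] M) :
    MultilinearMap.alternatization (T.compLinearMap fun _ => φ) =
      (MultilinearMap.alternatization T).compLinearMap φ := by
  ext v
  simp [MultilinearMap.alternatization_apply]

theorem alternatingMap_compLinearMap_eq_det_smul {R M κ : Type*} [CommRing R] [AddCommGroup M]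
    [Module R M] [Finite κ] (b : Basis κ R M) (f : M [⋀^κ]→ₗ[R] R) (φ : M →ₗ[R] M) :
    f.compLinearMap φ = LinearMap.det φ • f := by
  classical
  cases nonempty_fintype κ
  ext v
  calc f (φ ∘ v) = f b * b.det (φ ∘ v) := DFunLike.congr_fun (f.eq_smul_basis_det b) (φ ∘ v)
    _ = LinearMap.det φ * (f b * b.det v) := by rw [b.det_comp, mul_left_comm]
    _ = LinearMap.det φ * f v :=
      congrArg (LinearMap.det φ * ·) (DFunLike.congr_fun (f.eq_smul_basis_det b) v).symm

theorem toBilin'_mul_mul_transpose {R μ κ : Type*} [CommSemiring R] [Fintype μ] [Fintype κ]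
    [DecidableEq μ] [DecidableEq κ] (g : Matrix μ κ R) (A : Matrix κ κ R) :
    (g * A * g.transpose).toBilin' = A.toBilin'.comp g.transpose.toLin' g.transpose.toLin' := by
  rw [Matrix.toBilin'_comp, Matrix.transpose_transpose]

section PairForm

variable {R M ι κ : Type*} [CommSemiring R] [AddCommMonoid M] [Module R M] [Fintype ι]

/-- A bilinear form regarded as a multilinear form in a family of vectors indexed by `Fin 2`. -/
def bilinMultilinear (B : LinearMap.BilinForm R M) : MultilinearMap R (fun _ : Fin 2 => M) R :=
  ((MultilinearMap.ofSubsingletonₗ R R M R (0 : Fin 1)).toLinearMap ∘ₗ B).uncurryLeft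

/-- The tensor product `⨂ᵢ Bᵢ` of a family of bilinear forms, as a multilinear form. The bijection
`e` says which two of its arguments, `e (i, 0)` and `e (i, 1)`, are fed to `Bᵢ`. -/
def pairForm (e : ι × Fin 2 ≃ κ) (B : ι → LinearMap.BilinForm R M) :
    MultilinearMap R (fun _ : κ => M) R :=
  MultilinearMap.domDomCongr ((Equiv.sigmaEquivProd ι (Fin 2)).trans e)
    ((MultilinearMap.mkPiAlgebra R ι R).compMultilinearMap fun i => bilinMultilinear (B i))

theorem pairForm_apply (e : ι × Fin 2 ≃ κ) (B : ι → LinearMap.BilinForm R M) (v : κ → M) :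
    pairForm e B v = ∏ i, B i (v (e (i, 0))) (v (e (i, 1))) :=
  rfl

theorem pairForm_comp {M' : Type*} [AddCommMonoid M'] [Module R M'] (e : ι × Fin 2 ≃ κ)
    (B : ι → LinearMap.BilinForm R M) (φ : M' →ₗ[R] M) :
    pairForm e (fun i => (B i).comp φ φ) = (pairForm e B).compLinearMap fun _ => φ :=
  rfl

end PairForm

section PairContract

variable {R ι κ : Type*} [CommRing R] [Fintype ι] [Fintype κ] [DecidableEq κ]

/-- The ε-contraction of a family of matrices over a commutative ring, with rows and columns indexed
by any finite type `κ`. The bijection `e` pairs off the indices of ε: those at the positions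
`e (i, 0)` and `e (i, 1)` are contracted with `Aᵢ`. -/
def pairContract (e : ι × Fin 2 ≃ κ) (A : ι → Matrix κ κ R) : R :=
  ∑ σ : Perm κ, ((Perm.sign σ : ℤ) : R) * ∏ i, A i (σ (e (i, 0))) (σ (e (i, 1)))

theorem pairContract_eq_alternatization (e : ι × Fin 2 ≃ κ) (A : ι → Matrix κ κ R) :
    pairContract e A =
      MultilinearMap.alternatization (pairForm e fun i => (A i).toBilin') (Pi.basisFun R κ) := by
  simp [pairContract, MultilinearMap.alternatization_apply, pairForm_apply, Units.smul_def,
    zsmul_eq_mul]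

theorem epsContract_conjugation_general (e : ι × Fin 2 ≃ κ) (g : Matrix κ κ R)
    (A : ι → Matrix κ κ R) :
    pairContract e (fun i => g * A i * g.transpose) = g.det * pairContract e A := by
  simp only [pairContract_eq_alternatization, toBilin'_mul_mul_transpose]
  rw [pairForm_comp, alternatization_compLinearMap,
    alternatingMap_compLinearMap_eq_det_smul (Pi.basisFun R κ), LinearMap.det_toLin',
    Matrix.det_transpose, AlternatingMap.smul_apply, smul_eq_mul]

end PairContract

/-- The bijection `(i, c) ↦ 2 * i + c`, which pairs off consecutive indices as `epsContract`
does. -/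
def consecutivePairs (n : ℕ) : Fin n × Fin 2 ≃ Fin (2 * n) :=
  finProdFinEquiv.trans (finCongr (mul_comm n 2))

theorem epsContract_eq_pairContract (n : ℕ) (A : Fin n → Matrix (Fin (2 * n)) (Fin (2 * n)) ℝ) :
    epsContract n A = pairContract (consecutivePairs n) A := by
  have pair_zero (i : Fin n) : consecutivePairs n (i, 0) = ⟨2 * i, by lia⟩ := by
    ext; simp [consecutivePairs]
  have pair_one (i : Fin n) : consecutivePairs n (i, 1) = ⟨2 * i + 1, by lia⟩ := by
    ext; simp [consecutivePairs, add_comm]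
  simp only [epsContract, pairContract, pair_zero, pair_one]

/-- For every real `(2n)×(2n)` matrix `g` and every `n`-tuple of real `(2n)×(2n)` matrices
`A₁, …, Aₙ`, one has `F(g·A₁·gᵀ, …, g·Aₙ·gᵀ) = det(g) · F(A₁, …, Aₙ)`. -/
theorem epsContract_conjugation (n : ℕ) (hn : 1 ≤ n)
    (g : Matrix (Fin (2 * n)) (Fin (2 * n)) ℝ)
    (A : Fin n → Matrix (Fin (2 * n)) (Fin (2 * n)) ℝ) :
    epsContract n (fun i => g * A i * g.transpose) = g.det * epsContract n A := by
  rw [epsContract_eq_pairContract, epsContract_eq_pairContract, epsContract_conjugation_general]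
end

section
/- If f is an antisymmetric function of p variables, then Af is an antisymmetric function of p+1 variables; that is, for every permutation σ of the p+1 arguments, (Af)(x_{σ(1)}, …, x_{σ(p+1)}) = sgn(σ) · (Af)(x₁, …, x_{p+1}). -/
/-- A function `f : X^p → M` is antisymmetric if
`f(x_{σ(1)}, …, x_{σ(p)}) = sgn(σ) · f(x₁, …, x_p)` for every permutation σ. -/
def AntisymmetricFn {X M : Type*} [AddCommGroup M] (p : ℕ) (f : (Fin p → X) → M) : Prop :=
  ∀ (σ : Equiv.Perm (Fin p)) (x : Fin p → X), f (x ∘ σ) = (Equiv.Perm.sign σ : ℤ) • f x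

/-- The antisymmetrising operator:
`(Af)(x₁,…,x_p,x_{p+1}) = f(x₁,…,x_p) − Σ_{i=1}^{p} f(x₁,…,x_{i−1},x_{p+1},x_{i+1},…,x_p)`. -/
def Aop {X M : Type*} [AddCommGroup M] (p : ℕ) (f : (Fin p → X) → M) :
    (Fin (p + 1) → X) → M :=
  fun x =>
    f (fun i => x i.castSucc)
      - ∑ i : Fin p, f (Function.update (fun j => x j.castSucc) i (x (Fin.last p)))

/-!
For a permutation `τ` of the `p + 1` arguments, the term `sgn(τ) f(x_{τ(1)}, …, x_{τ(p)})` depends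
only on the omitted index `τ(p+1)`, because `f` is antisymmetric. `Af` is the sum of these terms
over the omitted index `k`, represented by the transpositions `(k, p+1)`. Permuting the arguments
by `σ` multiplies each term by `sgn(σ)` and permutes the omitted indices.
-/

open Equiv

theorem exists_perm_succAbove_of_apply_eq_self {n : ℕ} {k : Fin (n + 1)} {ρ : Perm (Fin (n + 1))}
    (hρ : ρ k = k) :
    ∃ ρ' : Perm (Fin n), Perm.sign ρ' = Perm.sign ρ ∧
      ∀ i, ρ (k.succAbove i) = k.succAbove (ρ' i) := by
  have apply_ne_iff (j : Fin (n + 1)) : ρ j ≠ k ↔ j ≠ k := by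
    rw [ρ.injective.ne_iff' hρ]
  have ne_of_moved (j : Fin (n + 1)) (hj : ρ j ≠ j) : j ≠ k := by
    rintro rfl
    exact hj hρ
  let e : {j // j ≠ k} ≃ Fin n := (finSuccAboveEquiv k).symm
  refine ⟨e.permCongr (ρ.subtypePerm apply_ne_iff), ?_, fun i ↦ ?_⟩
  · rw [Perm.sign_permCongr, Perm.sign_subtypePerm ρ apply_ne_iff ne_of_moved]
  · exact (congrArg Subtype.val (e.symm_apply_apply (ρ.subtypePerm apply_ne_iff (e.symm i)))).symm

section SignedInit

variable {X M : Type*} [AddCommGroup M] {p : ℕ}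

/-- The signed term `sgn(τ) f(x_{τ(1)}, …, x_{τ(p)})` omitting the argument `x_{τ(p+1)}`; `Af` is a
sum of such terms. Signs act as units of `ℤ`, so that they multiply without coercions. -/
def signedInit (f : (Fin p → X) → M) (x : Fin (p + 1) → X) (τ : Perm (Fin (p + 1))) : M :=
  Perm.sign τ • f (Fin.init (x ∘ τ))

theorem signedInit_comp_perm (f : (Fin p → X) → M) (x : Fin (p + 1) → X)
    (σ τ : Perm (Fin (p + 1))) :
    signedInit f (x ∘ σ) τ = Perm.sign σ • signedInit f x (σ * τ) := by
  rw [signedInit, signedInit, smul_smul, Perm.sign_mul, ← mul_assoc, Int.units_mul_self, one_mul,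
    Perm.coe_mul, Function.comp_assoc]

theorem signedInit_swap_castSucc_last (f : (Fin p → X) → M) (x : Fin (p + 1) → X) (i : Fin p) :
    signedInit f x (swap i.castSucc (Fin.last p)) =
      -f (Function.update (Fin.init x) i (x (Fin.last p))) := by
  rw [signedInit, Perm.sign_swap i.castSucc_ne_last, comp_swap_eq_update, Fin.init_update_castSucc,
    Fin.init_update_last, Units.neg_smul, one_smul]

theorem Aop_eq_sum_signedInit_swap (f : (Fin p → X) → M) (x : Fin (p + 1) → X) :
    Aop p f x = ∑ k, signedInit f x (swap k (Fin.last p)) := by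
  have last_term : signedInit f x (swap (Fin.last p) (Fin.last p)) = f (Fin.init x) := by
    rw [signedInit, swap_self, Perm.sign_refl, one_smul, coe_refl, Function.comp_id]
  simp only [Fin.sum_univ_castSucc, signedInit_swap_castSucc_last, last_term,
    Finset.sum_neg_distrib]
  exact sub_eq_neg_add _ _

namespace AntisymmetricFn

variable {f : (Fin p → X) → M}

theorem signedInit_mul_of_apply_last (hf : AntisymmetricFn p f) (x : Fin (p + 1) → X)
    (τ : Perm (Fin (p + 1))) {ρ : Perm (Fin (p + 1))} (hρ : ρ (Fin.last p) = Fin.last p) :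
    signedInit f x (τ * ρ) = signedInit f x τ := by
  obtain ⟨ρ', sign_eq, ρ_succAbove⟩ := exists_perm_succAbove_of_apply_eq_self hρ
  have init_comp : Fin.init (x ∘ (τ * ρ)) = Fin.init (x ∘ τ) ∘ ρ' := by
    funext i
    simpa only [Fin.init, Function.comp_apply, Perm.mul_apply, Fin.succAbove_last] using
      congrArg (x ∘ τ) (ρ_succAbove i)
  have f_init : f (Fin.init (x ∘ τ) ∘ ρ') = Perm.sign ρ • f (Fin.init (x ∘ τ)) :=
    sign_eq ▸ hf ρ' _
  rw [signedInit, init_comp, f_init, smul_smul, Perm.sign_mul, mul_assoc, Int.units_mul_self,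
    mul_one, signedInit]

theorem signedInit_eq_of_apply_last_eq (hf : AntisymmetricFn p f) (x : Fin (p + 1) → X)
    {τ τ' : Perm (Fin (p + 1))} (h : τ (Fin.last p) = τ' (Fin.last p)) :
    signedInit f x τ = signedInit f x τ' := by
  have fixes_last : (τ'⁻¹ * τ) (Fin.last p) = Fin.last p := by
    rw [Perm.mul_apply, Perm.inv_eq_iff_eq, h]
  rw [← hf.signedInit_mul_of_apply_last x τ' fixes_last, mul_inv_cancel_left]

end AntisymmetricFn

end SignedInit

/-- If `f` is an antisymmetric function of `p` variables, then `Af` is an antisymmetric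
function of `p+1` variables. -/
theorem antisymmetricFn_Aop {X M : Type*} [AddCommGroup M] (p : ℕ)
    (f : (Fin p → X) → M) (hf : AntisymmetricFn p f) :
    AntisymmetricFn (p + 1) (Aop p f) := by
  intro σ x
  have permuted_term (k : Fin (p + 1)) :
      signedInit f x (σ * swap k (Fin.last p)) = signedInit f x (swap (σ k) (Fin.last p)) :=
    hf.signedInit_eq_of_apply_last_eq x (by
      rw [Perm.mul_apply, swap_apply_right, swap_apply_right])
  calc
    Aop p f (x ∘ σ) = ∑ k, signedInit f (x ∘ σ) (swap k (Fin.last p)) :=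
      Aop_eq_sum_signedInit_swap f (x ∘ σ)
    _ = ∑ k, Perm.sign σ • signedInit f x (swap (σ k) (Fin.last p)) := by
      simp only [signedInit_comp_perm, permuted_term]
    _ = Perm.sign σ • ∑ k, signedInit f x (swap k (Fin.last p)) := by
      rw [← Finset.smul_sum, Equiv.sum_comp σ fun k ↦ signedInit f x (swap k (Fin.last p))]
    _ = (Perm.sign σ : ℤ) • Aop p f x := by
      rw [← Aop_eq_sum_signedInit_swap, Units.smul_def]
end

section
/- The map T restricts to a bijection from the open unit cube (0,1)^p onto the open standard p-simplex Δ_p, with inverse given by S(t)_i = t_i / (1 − Σ_{j<i} t_j). -/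
/-- The reparametrisation `T : ℝ^p → ℝ^p`, `(T s)_i = s_i · ∏_{j<i} (1 − s_j)`. -/
def Tmap (p : ℕ) (s : Fin p → ℝ) : Fin p → ℝ :=
  fun i => s i * ∏ j ∈ Finset.Iio i, (1 - s j)

/-- The inverse reparametrisation `S : ℝ^p → ℝ^p`, `(S t)_i = t_i / (1 − Σ_{j<i} t_j)`. -/
noncomputable def Smap (p : ℕ) (t : Fin p → ℝ) : Fin p → ℝ :=
  fun i => t i / (1 - ∑ j ∈ Finset.Iio i, t j)

/-- The open unit cube `(0,1)^p`. -/
def unitCube (p : ℕ) : Set (Fin p → ℝ) := {s | ∀ i, s i ∈ Set.Ioo (0 : ℝ) 1}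

/-- The open standard `p`-simplex `Δ_p = {t : t_i > 0, Σ_i t_i < 1}`. -/
def openSimplex (p : ℕ) : Set (Fin p → ℝ) := {t | (∀ i, 0 < t i) ∧ ∑ i, t i < 1}

/-!
Break a stick of unit length: the `i`-th step removes the fraction `s i` of what is left, so it
removes a piece of length `t i = s i * ∏_{j<i} (1 - s j)`. What is left before step `i` is
`∏_{j<i} (1 - s j)` by multiplying the fractions kept, and `1 - ∑_{j<i} t j` by subtracting the
pieces removed. Equating the two recovers `s i` from `t` by one division, and shows that something
is left at the end, `∑ j, t j < 1`, when every fraction is less than `1`.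
-/

section StickBreaking

open Finset

theorem wellFoundedLT_of_locallyFiniteOrderBot (α : Type*) [Preorder α] [LocallyFiniteOrderBot α] :
    WellFoundedLT α :=
  StrictMono.wellFoundedLT (f := fun i : α => Iio i) fun _ _ => Iio_ssubset_Iio

theorem lt_sub_sum_Iio_of_sum_lt {α M : Type*} [PartialOrder α] [LocallyFiniteOrderBot α]
    [Fintype α] [AddCommGroup M] [PartialOrder M] [IsOrderedAddMonoid M] {t : α → M} {c : M}
    (ht : ∀ i, 0 ≤ t i) (hc : ∑ i, t i < c) (i : α) : t i < c - ∑ j ∈ Iio i, t j := by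
  rw [lt_sub_iff_add_lt]
  calc t i + ∑ j ∈ Iio i, t j = ∑ j ∈ Iic i, t j := by rw [Iic_eq_cons_Iio, sum_cons]
    _ ≤ ∑ j, t j := sum_le_univ_sum_of_nonneg ht
    _ < c := hc

variable {ι R K : Type*} [LinearOrder ι] [LocallyFiniteOrderBot ι]

/-- The lengths of the pieces broken off a stick of unit length when step `i` removes the fraction
`s i` of what is left: the map `T` over an arbitrary commutative ring and index order. -/
def stickBreaking [CommRing R] (s : ι → R) : ι → R :=
  fun i => s i * ∏ j ∈ Iio i, (1 - s j)

/-- The fractions removed at each step when the pieces have lengths `t`: the map `S` over an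
arbitrary field and index order. A step that finds nothing left gets the junk value `0`. -/
def stickFraction [Field K] (t : ι → K) : ι → K :=
  fun i => t i / (1 - ∑ j ∈ Iio i, t j)

theorem prod_one_sub_eq_one_sub_sum_stickBreaking [CommRing R] (s : ι → R) {A : Finset ι}
    (hA : IsLowerSet (A : Set ι)) :
    ∏ j ∈ A, (1 - s j) = 1 - ∑ j ∈ A, stickBreaking s j := by
  have filter_lt_eq_Iio {i : ι} (hi : i ∈ A) : {j ∈ A | j < i} = Iio i := by
    ext j
    simpa using fun hj : j < i => hA hj.le hi
  rw [prod_one_sub_ordered]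
  congr 1
  refine sum_congr rfl fun i hi => ?_
  rw [filter_lt_eq_Iio hi, stickBreaking]

theorem prod_Iio_one_sub_eq_one_sub_sum_stickBreaking [CommRing R] (s : ι → R) (i : ι) :
    ∏ j ∈ Iio i, (1 - s j) = 1 - ∑ j ∈ Iio i, stickBreaking s j :=
  prod_one_sub_eq_one_sub_sum_stickBreaking s (by simpa using isLowerSet_Iio i)

theorem stickFraction_stickBreaking [Field K] {s : ι → K} (hs : ∀ i, s i ≠ 1) :
    stickFraction (stickBreaking s) = s := by
  funext i
  have prod_ne_zero : ∏ j ∈ Iio i, (1 - s j) ≠ 0 :=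
    prod_ne_zero_iff.2 fun j _ => sub_ne_zero.2 (hs j).symm
  rw [stickFraction, ← prod_Iio_one_sub_eq_one_sub_sum_stickBreaking, stickBreaking,
    mul_div_cancel_right₀ _ prod_ne_zero]

theorem stickBreaking_stickFraction [Field K] {t : ι → K} (ht : ∀ i, ∑ j ∈ Iio i, t j ≠ 1) :
    stickBreaking (stickFraction t) = t := by
  have := wellFoundedLT_of_locallyFiniteOrderBot ι
  funext i
  induction i using WellFoundedLT.induction with
  | ind i ih =>
    have sum_eq : ∑ j ∈ Iio i, stickBreaking (stickFraction t) j = ∑ j ∈ Iio i, t j :=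
      sum_congr rfl fun j hj => ih j (mem_Iio.1 hj)
    rw [stickBreaking, prod_Iio_one_sub_eq_one_sub_sum_stickBreaking, sum_eq, stickFraction,
      div_mul_cancel₀ _ (sub_ne_zero.2 (ht i).symm)]

theorem stickBreaking_pos [CommRing R] [PartialOrder R] [IsStrictOrderedRing R] {s : ι → R}
    (hs : ∀ i, s i ∈ Set.Ioo 0 1) (i : ι) : 0 < stickBreaking s i :=
  mul_pos (hs i).1 (prod_pos fun j _ => sub_pos.2 (hs j).2)

theorem sum_stickBreaking_lt_one [Fintype ι] [CommRing R] [PartialOrder R] [IsStrictOrderedRing R]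
    {s : ι → R} (hs : ∀ i, s i < 1) : ∑ i, stickBreaking s i < 1 := by
  rw [← sub_pos, ← prod_one_sub_eq_one_sub_sum_stickBreaking s (by simpa using isLowerSet_univ)]
  exact prod_pos fun j _ => sub_pos.2 (hs j)

theorem stickFraction_mem_Ioo [Field K] [LinearOrder K] [IsStrictOrderedRing K] {t : ι → K}
    {i : ι} (hpos : 0 < t i) (hlt : t i < 1 - ∑ j ∈ Iio i, t j) :
    stickFraction t i ∈ Set.Ioo 0 1 :=
  ⟨div_pos hpos (hpos.trans hlt), (div_lt_one (hpos.trans hlt)).2 hlt⟩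

theorem Tmap_bijOn_invOn_general [Fintype ι] [Field K] [LinearOrder K] [IsStrictOrderedRing K] :
    let cube : Set (ι → K) := {s | ∀ i, s i ∈ Set.Ioo 0 1}
    let simplex : Set (ι → K) := {t | (∀ i, 0 < t i) ∧ ∑ i, t i < 1}
    Set.BijOn stickBreaking cube simplex ∧
      Set.InvOn stickFraction stickBreaking cube simplex := by
  intro cube simplex
  have lt_remainder {t : ι → K} (ht : t ∈ simplex) (i : ι) : t i < 1 - ∑ j ∈ Iio i, t j :=
    lt_sub_sum_Iio_of_sum_lt (fun j => (ht.1 j).le) ht.2 i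
  have stickBreaking_mapsTo : Set.MapsTo stickBreaking cube simplex := fun s hs =>
    ⟨stickBreaking_pos hs, sum_stickBreaking_lt_one fun i => (hs i).2⟩
  have stickFraction_mapsTo : Set.MapsTo stickFraction simplex cube := fun t ht i =>
    stickFraction_mem_Ioo (ht.1 i) (lt_remainder ht i)
  have invOn : Set.InvOn stickFraction stickBreaking cube simplex :=
    ⟨fun s hs => stickFraction_stickBreaking fun i => (hs i).2.ne,
      fun t ht => stickBreaking_stickFraction fun i =>
        (sub_pos.1 ((ht.1 i).trans (lt_remainder ht i))).ne⟩
  exact ⟨invOn.bijOn stickBreaking_mapsTo stickFraction_mapsTo, invOn⟩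

end StickBreaking

/-- The map `T` restricts to a bijection from the open unit cube `(0,1)^p` onto the open
standard `p`-simplex `Δ_p`, with inverse given by `S(t)_i = t_i / (1 − Σ_{j<i} t_j)`. -/
theorem Tmap_bijOn_invOn (p : ℕ) :
    Set.BijOn (Tmap p) (unitCube p) (openSimplex p) ∧
      Set.InvOn (Smap p) (Tmap p) (unitCube p) (openSimplex p) :=
  Tmap_bijOn_invOn_general
end

section
/- The map S defined by S(t)_i = t_i / (1 − Σ_{j<i} t_j) is differentiable at every t ∈ ℝ^p at which all the quantities 1 − Σ_{j<i} t_j (for i = 0, …, p−1) are nonzero (in particular at every t ∈ Δ_p), and at such a point the determinant of its derivative equals ∏_{i=0}^{p−1} (1 − Σ_{j<i} t_j)^{−1}. -/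
/-!
Each coordinate of `S` is a quotient `x_i / d_i(x)` in which `d_i` depends only on the coordinates
before `i`. Hence the Jacobian matrix is lower triangular, and differentiating the denominator does
not contribute to its diagonal, which is `(d_i(x)⁻¹)_i`.
-/

theorem det_eq_prod_apply_single_of_lowerTriangular {ι R : Type*} [Fintype ι] [LinearOrder ι]
    [CommRing R] (f : (ι → R) →ₗ[R] (ι → R)) (hf : ∀ i j, i < j → f (Pi.single j 1) i = 0) :
    LinearMap.det f = ∏ i, f (Pi.single i 1) i := by
  have h_lower : (LinearMap.toMatrix' f).IsLowerTriangular := fun i j hij => by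
    simpa only [LinearMap.toMatrix'_apply] using hf i j hij
  rw [← LinearMap.det_toMatrix', Matrix.det_of_isLowerTriangular _ h_lower]
  simp only [LinearMap.toMatrix'_apply]

section Calculus

variable {𝕜 : Type*} [NontriviallyNormedField 𝕜]

theorem hasFDerivAt_div {E : Type*} [NormedAddCommGroup E] [NormedSpace 𝕜 E] {c d : E → 𝕜}
    {c' d' : E →L[𝕜] 𝕜} {x : E} (hc : HasFDerivAt c c' x) (hd : HasFDerivAt d d' x)
    (hx : d x ≠ 0) :
    HasFDerivAt (fun y => c y / d y) ((d x)⁻¹ • (c' - (c x / d x) • d')) x := by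
  simp only [div_eq_mul_inv]
  refine (hc.mul ((hasDerivAt_inv hx).comp_hasFDerivAt x hd)).congr_fderiv ?_
  ext v
  simp only [add_apply, sub_apply, smul_apply, smul_eq_mul, Function.comp_apply]
  field_simp
  ring

variable {ι : Type*}

theorem hasFDerivAt_sum_apply (s : Finset ι) (x : ι → 𝕜) :
    HasFDerivAt (fun y : ι → 𝕜 => ∑ j ∈ s, y j)
      (∑ j ∈ s, ContinuousLinearMap.proj (R := 𝕜) (φ := fun _ : ι => 𝕜) j) x := by
  convert! ContinuousLinearMap.hasFDerivAt _ using 1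
  ext y
  simp

variable {d : ι → (ι → 𝕜) → 𝕜} {d' : ι → (ι → 𝕜) →L[𝕜] 𝕜} {x : ι → 𝕜}

theorem hasFDerivAt_pi_div [Finite ι] (hd : ∀ i, HasFDerivAt (d i) (d' i) x) (hx : ∀ i, d i x ≠ 0) :
    HasFDerivAt (fun y i => y i / d i y)
      (ContinuousLinearMap.pi fun i =>
        (d i x)⁻¹ • (ContinuousLinearMap.proj i - (x i / d i x) • d' i)) x := by
  cases nonempty_fintype ι
  exact hasFDerivAt_pi.2 fun i => hasFDerivAt_div (hasFDerivAt_apply i x) (hd i) (hx i)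

theorem det_fderiv_pi_div [Fintype ι] [LinearOrder ι]
    (hd : ∀ i, HasFDerivAt (d i) (d' i) x) (hx : ∀ i, d i x ≠ 0)
    (hd' : ∀ i j, i ≤ j → d' i (Pi.single j 1) = 0) :
    LinearMap.det (fderiv 𝕜 (fun y i => y i / d i y) x).toLinearMap = ∏ i, (d i x)⁻¹ := by
  have h_entry (i j : ι) (hij : i ≤ j) :
      fderiv 𝕜 (fun y i => y i / d i y) x (Pi.single j 1) i
        = (d i x)⁻¹ * (Pi.single j 1 : ι → 𝕜) i := by
    simp [(hasFDerivAt_pi_div hd hx).fderiv, hd' i j hij]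
  rw [det_eq_prod_apply_single_of_lowerTriangular]
  · refine Finset.prod_congr rfl fun i _ => (h_entry i i le_rfl).trans ?_
    rw [Pi.single_eq_same, mul_one]
  · intro i j hij
    refine (h_entry i j hij.le).trans ?_
    rw [Pi.single_eq_of_ne hij.ne, mul_zero]

end Calculus

theorem sum_lt_one_of_mem_openSimplex {p : ℕ} {t : Fin p → ℝ} (ht : t ∈ openSimplex p)
    (s : Finset (Fin p)) : ∑ j ∈ s, t j < 1 :=
  (Finset.sum_le_univ_sum_of_nonneg fun j => (ht.1 j).le).trans_lt ht.2

/-- The map `S` is differentiable at every `t ∈ ℝ^p` at which all the quantities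
`1 − Σ_{j<i} t_j` are nonzero (in particular at every `t ∈ Δ_p`), and at such a point the
determinant of its derivative equals `∏_{i} (1 − Σ_{j<i} t_j)⁻¹`. -/
theorem differentiableAt_Smap_and_det_fderiv (p : ℕ) :
    (∀ t : Fin p → ℝ, (∀ i : Fin p, 1 - ∑ j ∈ Finset.Iio i, t j ≠ 0) →
      DifferentiableAt ℝ (Smap p) t ∧
        LinearMap.det ((fderiv ℝ (Smap p) t).toLinearMap)
          = ∏ i : Fin p, (1 - ∑ j ∈ Finset.Iio i, t j)⁻¹) ∧
    (∀ t ∈ openSimplex p, ∀ i : Fin p, 1 - ∑ j ∈ Finset.Iio i, t j ≠ 0) := by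
  refine ⟨fun t ht => ?_, fun t ht i =>
    (sub_pos.2 (sum_lt_one_of_mem_openSimplex ht (Finset.Iio i))).ne'⟩
  have h_denom (i : Fin p) := (hasFDerivAt_sum_apply (Finset.Iio i) t).const_sub 1
  refine ⟨(hasFDerivAt_pi_div h_denom ht).differentiableAt,
    det_fderiv_pi_div h_denom ht fun i j hij => ?_⟩
  have h_ne (k : Fin p) (hk : k ∈ Finset.Iio i) : k ≠ j :=
    ((Finset.mem_Iio.1 hk).trans_le hij).ne
  simpa using Finset.sum_eq_zero fun k hk =>
    Pi.single_eq_of_ne (M := fun _ : Fin p => ℝ) (h_ne k hk) 1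
end

section
/- Under these hypotheses, Ω = Σ_{i,j} C_i C_j · A_{ij}, where A_{ij} := ½ (Ω_i + Ω_j − (ω_i − ω_j)·(ω_i − ω_j)). That is, the curvature of the interpolated connection is the weighted average of the pairwise combinations A_{ij} built from the individual curvatures and the squared differences of the connections. -/
/-!
Polarization is the point: for weights of total mass `1`, the weighted mean of `B (ω i) (ω i)`
exceeds `B` at the weighted mean of the `ω i` by half of the weighted mean of
`B (ω i - ω j) (ω i - ω j)`, as in the two expressions for the variance. Here `B` stands for the
product of an algebra, or for `½[·,·]` on Lie-algebra-valued 1-forms.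
-/

section WeightedPairs

variable {ι R M N : Type*}

theorem sum_sum_mul_smul_add [CommSemiring R] [AddCommMonoid M] [Module R M]
    (s : Finset ι) (C : ι → R) (x : ι → M) :
    ∑ i ∈ s, ∑ j ∈ s, (C i * C j) • (x i + x j)
      = (2 : R) • (∑ i ∈ s, C i) • ∑ i ∈ s, C i • x i := by
  have sum_right : ∑ i ∈ s, ∑ j ∈ s, (C i * C j) • x j = (∑ i ∈ s, C i) • ∑ i ∈ s, C i • x i := by
    simp only [Finset.sum_smul_sum, mul_smul]
  have sum_left : ∑ i ∈ s, ∑ j ∈ s, (C i * C j) • x i = (∑ i ∈ s, C i) • ∑ i ∈ s, C i • x i := by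
    rw [Finset.sum_comm, ← sum_right]
    simp only [mul_comm]
  simp only [smul_add, Finset.sum_add_distrib, sum_left, sum_right, two_smul]

theorem bilin_sum_smul_sum_smul {κ M' : Type*} [CommSemiring R] [AddCommMonoid M]
    [AddCommMonoid M'] [AddCommMonoid N] [Module R M] [Module R M'] [Module R N]
    (B : M →ₗ[R] M' →ₗ[R] N) (s : Finset ι) (t : Finset κ) (C : ι → R) (D : κ → R)
    (x : ι → M) (y : κ → M') :
    B (∑ i ∈ s, C i • x i) (∑ j ∈ t, D j • y j)
      = ∑ i ∈ s, ∑ j ∈ t, (C i * D j) • B (x i) (y j) := by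
  simp_rw [LinearMap.map_sum₂, map_sum, LinearMap.map_smul₂, map_smul, mul_smul]

variable [CommRing R] [AddCommGroup M] [AddCommGroup N] [Module R M] [Module R N]

theorem sum_sum_mul_smul_bilin_sub_sub (B : M →ₗ[R] M →ₗ[R] N) (s : Finset ι) (C : ι → R)
    (x : ι → M) :
    ∑ i ∈ s, ∑ j ∈ s, (C i * C j) • B (x i - x j) (x i - x j)
      = (2 : R) • ((∑ i ∈ s, C i) • ∑ i ∈ s, C i • B (x i) (x i)
          - B (∑ i ∈ s, C i • x i) (∑ i ∈ s, C i • x i)) := by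
  have expand (i j : ι) : B (x i - x j) (x i - x j)
      = (B (x i) (x i) + B (x j) (x j)) - (B (x i) (x j) + B (x j) (x i)) := by
    simp only [map_sub, LinearMap.sub_apply]
    abel
  have cross : ∑ i ∈ s, ∑ j ∈ s, (C i * C j) • B (x j) (x i)
      = B (∑ i ∈ s, C i • x i) (∑ i ∈ s, C i • x i) := by
    rw [Finset.sum_comm, bilin_sum_smul_sum_smul]
    simp only [mul_comm]
  simp only [expand, smul_sub, Finset.sum_sub_distrib, sum_sum_mul_smul_add]
  simp only [smul_add, Finset.sum_add_distrib, cross, ← bilin_sum_smul_sum_smul, two_smul]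

theorem interpolated_curvature_eq_weighted_average_general [Invertible (2 : R)]
    (B : M →ₗ[R] M →ₗ[R] N) (s : Finset ι) (ω : ι → M) (e : ι → N) (C : ι → R)
    (hC : ∑ i ∈ s, C i = 1) :
    (∑ i ∈ s, C i • e i) + B (∑ i ∈ s, C i • ω i) (∑ i ∈ s, C i • ω i)
      = ∑ i ∈ s, ∑ j ∈ s, (C i * C j) •
          (⅟2 : R) • ((e i + B (ω i) (ω i)) + (e j + B (ω j) (ω j))
            - B (ω i - ω j) (ω i - ω j)) := by
  symm
  set Ω : ι → N := fun i ↦ e i + B (ω i) (ω i)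
  set ωbar := ∑ i ∈ s, C i • ω i
  calc ∑ i ∈ s, ∑ j ∈ s, (C i * C j) • (⅟2 : R) • (Ω i + Ω j - B (ω i - ω j) (ω i - ω j))
    _ = (⅟2 : R) • (∑ i ∈ s, ∑ j ∈ s, (C i * C j) • (Ω i + Ω j)
          - ∑ i ∈ s, ∑ j ∈ s, (C i * C j) • B (ω i - ω j) (ω i - ω j)) := by
      simp only [smul_comm _ (⅟2 : R), ← Finset.smul_sum, smul_sub, Finset.sum_sub_distrib]
    _ = ∑ i ∈ s, C i • Ω i - (∑ i ∈ s, C i • B (ω i) (ω i) - B ωbar ωbar) := by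
      rw [sum_sum_mul_smul_add, sum_sum_mul_smul_bilin_sub_sub, hC, one_smul, one_smul,
        ← smul_sub, invOf_smul_smul]
    _ = ∑ i ∈ s, C i • e i + B ωbar ωbar := by
      simp only [Ω, smul_add, Finset.sum_add_distrib]
      abel

end WeightedPairs

/-- Let `A` be an associative real algebra, `ω_i, e_i ∈ A` (`e_i` playing the role of `dω_i`),
and real weights `C_i` with `Σ_i C_i = 1`. With curvatures `Ω_i := e_i + ω_i·ω_i` and
interpolated curvature `Ω := Σ_i C_i e_i + (Σ_i C_i ω_i)·(Σ_i C_i ω_i)`, one has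
`Ω = Σ_{i,j} C_i C_j · A_{ij}` where
`A_{ij} := ½ (Ω_i + Ω_j − (ω_i − ω_j)·(ω_i − ω_j))`. -/
theorem interpolated_curvature_eq_weighted_average
    {ι : Type*} [Fintype ι] {A : Type*} [Ring A] [Algebra ℝ A]
    (ω e : ι → A) (C : ι → ℝ) (hC : ∑ i, C i = 1) :
    (∑ i, C i • e i) + (∑ i, C i • ω i) * (∑ i, C i • ω i)
      = ∑ i, ∑ j, (C i * C j) •
          ((1 / 2 : ℝ) •
            ((e i + ω i * ω i) + (e j + ω j * ω j) - (ω i - ω j) * (ω i - ω j))) := by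
  simpa only [LinearMap.mul_apply', invOf_eq_inv, one_div] using
    interpolated_curvature_eq_weighted_average_general (LinearMap.mul ℝ A) Finset.univ ω e C hC
end

section
/- Under these hypotheses, α₂ · ⟨φ, L(Lφ + c·φ)⟩ = α₁ · ⟨ψ₂, Lψ₂⟩ − α₁ · ⟨ψ₁, Lψ₁ + c·ψ₁⟩. That is, after the field redefinition the higher-derivative quadratic form splits into a massless piece and a massive piece which enters with the opposite (ghost) sign. -/
open scoped RealInnerProductSpace

/-!
Put `c = α₁ / α₂`. The two modes satisfy `ψ₂ - ψ₁ = φ`, `c • ψ₂ = L φ + c • φ` and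
`L ψ₂ = L ψ₁ + c • ψ₁`. The second turns `α₂ ⟨φ, L (L φ + c φ)⟩` into `α₁ ⟨φ, L ψ₂⟩`; the first
splits this as `α₁ ⟨ψ₂, L ψ₂⟩ - α₁ ⟨ψ₁, L ψ₂⟩`, and the third identifies the subtracted term as
the massive one. The ghost sign is thus the sign of `ψ₁` in `φ = ψ₂ - ψ₁`.
-/

section Modes

variable {K V : Type*} [Field K] [AddCommGroup V] [Module K V]

/-- The massive component `ψ₁` of the field `φ`. Only the ratio `c = α₁ / α₂` enters, so the scale
`α₂ / α₁` of the field redefinition is written `c⁻¹`. -/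
def massiveMode (L : V →ₗ[K] V) (c : K) (φ : V) : V :=
  c⁻¹ • L φ

/-- The massless component `ψ₂` of the field `φ`, with the same scale `c⁻¹` as `massiveMode`. -/
def masslessMode (L : V →ₗ[K] V) (c : K) (φ : V) : V :=
  c⁻¹ • (L φ + c • φ)

theorem smul_masslessMode (L : V →ₗ[K] V) {c : K} (hc : c ≠ 0) (φ : V) :
    c • masslessMode L c φ = L φ + c • φ :=
  smul_inv_smul₀ hc _

theorem masslessMode_sub_massiveMode (L : V →ₗ[K] V) {c : K} (hc : c ≠ 0) (φ : V) :
    masslessMode L c φ - massiveMode L c φ = φ := by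
  rw [masslessMode, massiveMode, ← smul_sub, add_sub_cancel_left, inv_smul_smul₀ hc]

theorem map_masslessMode (L : V →ₗ[K] V) (c : K) (φ : V) :
    L (masslessMode L c φ) = L (massiveMode L c φ) + c • massiveMode L c φ := by
  rw [masslessMode, massiveMode, smul_add, map_add, smul_comm c⁻¹ c φ, map_smul L c,
    map_smul L c⁻¹ φ]

/-- The values of `B` are vectors so that `B` may also be a pointwise product of fields, in which
case the identity is one between Lagrangian densities. -/
theorem higher_derivative_ghost_split_general {M : Type*} [AddCommGroup M] [Module K M]
    {σ : K →+* K} (B : V →ₛₗ[σ] V →ₗ[K] M) (L : V →ₗ[K] V) {α₁ α₂ : K}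
    (hα₁ : α₁ ≠ 0) (hα₂ : α₂ ≠ 0) (φ : V) :
    α₂ • B φ (L (L φ + (α₁ / α₂) • φ))
      = α₁ • B (masslessMode L (α₁ / α₂) φ) (L (masslessMode L (α₁ / α₂) φ))
        - α₁ • B (massiveMode L (α₁ / α₂) φ)
            (L (massiveMode L (α₁ / α₂) φ) + (α₁ / α₂) • massiveMode L (α₁ / α₂) φ) := by
  have hc : α₁ / α₂ ≠ 0 := div_ne_zero hα₁ hα₂
  set ψ₁ := massiveMode L (α₁ / α₂) φ
  set ψ₂ := masslessMode L (α₁ / α₂) φ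
  calc α₂ • B φ (L (L φ + (α₁ / α₂) • φ))
      = α₂ • B φ (L ((α₁ / α₂) • ψ₂)) := by rw [smul_masslessMode L hc]
    _ = α₁ • B φ (L ψ₂) := by rw [map_smul, map_smul, smul_smul, mul_div_cancel₀ _ hα₂]
    _ = α₁ • B (ψ₂ - ψ₁) (L ψ₂) := by rw [masslessMode_sub_massiveMode L hc]
    _ = α₁ • B ψ₂ (L ψ₂) - α₁ • B ψ₁ (L ψ₂) := by rw [map_sub, LinearMap.sub_apply, smul_sub]
    _ = α₁ • B ψ₂ (L ψ₂) - α₁ • B ψ₁ (L ψ₁ + (α₁ / α₂) • ψ₁) := by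
      rw [← map_masslessMode]

end Modes

/-- Field redefinition for the higher-derivative quadratic form: with
`c := α₁/α₂`, `ψ₁ := (α₂/α₁)·Lφ` and `ψ₂ := (α₂/α₁)·(Lφ + c·φ)`, one has
`α₂ · ⟨φ, L(Lφ + c·φ)⟩ = α₁ · ⟨ψ₂, Lψ₂⟩ − α₁ · ⟨ψ₁, Lψ₁ + c·ψ₁⟩`:
the quadratic form splits into a massless piece and a massive ghost piece. -/
theorem higher_derivative_ghost_split
    {V : Type*} [NormedAddCommGroup V] [InnerProductSpace ℝ V]
    (L : V →ₗ[ℝ] V) (hL : ∀ x y : V, ⟪L x, y⟫ = ⟪x, L y⟫)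
    (α₁ α₂ : ℝ) (hα₁ : α₁ ≠ 0) (hα₂ : α₂ ≠ 0) (φ : V) :
    α₂ * ⟪φ, L (L φ + (α₁ / α₂) • φ)⟫
      = α₁ * ⟪(α₂ / α₁) • (L φ + (α₁ / α₂) • φ),
              L ((α₂ / α₁) • (L φ + (α₁ / α₂) • φ))⟫
        - α₁ * ⟪(α₂ / α₁) • L φ,
                L ((α₂ / α₁) • L φ) + (α₁ / α₂) • ((α₂ / α₁) • L φ)⟫ := by
  simpa only [masslessMode, massiveMode, inv_div, smul_eq_mul, innerₛₗ_apply_apply] using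
    higher_derivative_ghost_split_general (innerₛₗ ℝ) L hα₁ hα₂ φ
end
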